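/- arXiv:2104.05616 — 9 statements merged into one kernel-verified Lean document; each statement's English description precedes it below -/
import Mathlib

section
/- Let V be a commutative quantale and (X,a) a V-group, and let N_X = {x ∈ X | k ≤ a(0,x) and k ≤ a(x,0)}. If x₁, x₂, x₁′, x₂′ ∈ X satisfy x₁ + (−x₁′) ∈ N_X and x₂ + (−x₂′) ∈ N_X, then a(x₁,x₂) = a(x₁′,x₂′). -/
theorem stmt_4 {V : Type*} [CompleteLattice V] [CommMonoid V]
    (hq : ∀ (v : V) (s : Set V), v * sSup s = ⨆ u ∈ s, v * u)
    {X : Type*} [AddGroup X] (a : X → X → V)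
    (ha_refl : ∀ x : X, 1 ≤ a x x)
    (ha_trans : ∀ x x' x'' : X, a x x' * a x' x'' ≤ a x x'')
    (ha_shift : ∀ x x' x'' : X, a x' x'' = a (x' + x) (x'' + x))
    (x₁ x₂ x₁' x₂' : X)
    (h₁ : x₁ + (-x₁') ∈ {x : X | 1 ≤ a 0 x ∧ 1 ≤ a x 0})
    (h₂ : x₂ + (-x₂') ∈ {x : X | 1 ≤ a 0 x ∧ 1 ≤ a x 0}) :
    a x₁ x₂ = a x₁' x₂' := by
  have mono : ∀ v u w : V, u ≤ w → v * u ≤ v * w := by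
    intro v u w h
    have h1 := hq v {u, w}
    rw [sSup_pair, sup_eq_right.mpr h] at h1
    rw [h1]
    exact le_iSup₂_of_le u (by simp) le_rfl
  have key : ∀ p q r s : X, 1 ≤ a p q → 1 ≤ a r s → a q r ≤ a p s := by
    intro p q r s h h'
    have e1 : a q r ≤ a q s := by
      have := mono (a q r) 1 (a r s) h'
      rw [mul_one] at this
      exact this.trans (ha_trans q r s)
    have e2 : a q s ≤ a p s := by
      have := mono (a q s) 1 (a p q) h
      rw [mul_one, mul_comm] at this
      exact this.trans (ha_trans p q s)
    exact e1.trans e2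
  have conv : ∀ x y : X, x + (-y) ∈ {x : X | 1 ≤ a 0 x ∧ 1 ≤ a x 0} →
      1 ≤ a y x ∧ 1 ≤ a x y := by
    rintro x y ⟨h, h'⟩
    rw [ha_shift y] at h h'
    simp only [zero_add, neg_add_cancel_right] at h h'
    exact ⟨h, h'⟩
  obtain ⟨p, p'⟩ := conv _ _ h₁
  obtain ⟨q, q'⟩ := conv _ _ h₂
  exact le_antisymm (key _ _ _ _ p q') (key _ _ _ _ p' q)
end

section
/- Let V be a commutative quantale, (X,a) a V-group, and N a normal subgroup of X. Define c on the quotient group X/N by c(w₁,w₂) = ⨆{a(x₁,x₂) | [x₁] = w₁ and [x₂] = w₂}. Then (X/N, c) is a V-group (c is reflexive, transitive and invariant by shifting) and the quotient map X → X/N is a V-homomorphism. -/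
theorem stmt_5 {V : Type*} [CompleteLattice V] [CommMonoid V]
    (hq : ∀ (v : V) (s : Set V), v * sSup s = ⨆ u ∈ s, v * u)
    {X : Type*} [AddGroup X] (a : X → X → V)
    (ha_refl : ∀ x : X, 1 ≤ a x x)
    (ha_trans : ∀ x x' x'' : X, a x x' * a x' x'' ≤ a x x'')
    (ha_shift : ∀ x x' x'' : X, a x' x'' = a (x' + x) (x'' + x))
    (N : AddSubgroup X) [N.Normal]
    (c : X ⧸ N → X ⧸ N → V)
    (hc : ∀ w₁ w₂ : X ⧸ N, c w₁ w₂ =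
      ⨆ x₁ : X, ⨆ x₂ : X,
        ⨆ (_ : (QuotientAddGroup.mk x₁ : X ⧸ N) = w₁ ∧ (QuotientAddGroup.mk x₂ : X ⧸ N) = w₂),
          a x₁ x₂) :
    (∀ w : X ⧸ N, 1 ≤ c w w) ∧
    (∀ w w' w'' : X ⧸ N, c w w' * c w' w'' ≤ c w w'') ∧
    (∀ w w' w'' : X ⧸ N, c w' w'' = c (w' + w) (w'' + w)) ∧
    (∀ x x' : X, a x x' ≤ c (QuotientAddGroup.mk x) (QuotientAddGroup.mk x')) := by
  have hle : ∀ x x' : X, a x x' ≤ c (QuotientAddGroup.mk x) (QuotientAddGroup.mk x') := by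
    intro x x'
    rw [hc]
    exact le_iSup_of_le x (le_iSup_of_le x' (le_iSup_of_le ⟨rfl, rfl⟩ le_rfl))
  have hS : ∀ w₁ w₂ : X ⧸ N, c w₁ w₂ = sSup {v : V | ∃ x₁ x₂ : X,
      (QuotientAddGroup.mk x₁ : X ⧸ N) = w₁ ∧ (QuotientAddGroup.mk x₂ : X ⧸ N) = w₂ ∧
        v = a x₁ x₂} := by
    intro w₁ w₂
    apply le_antisymm
    · rw [hc]
      exact iSup_le fun x₁ => iSup_le fun x₂ => iSup_le fun h =>
        le_sSup ⟨x₁, x₂, h.1, h.2, rfl⟩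
    · apply sSup_le
      rintro _ ⟨x₁, x₂, rfl, rfl, rfl⟩
      exact hle _ _
  have hsh : ∀ w w' w'' : X ⧸ N, c w' w'' ≤ c (w' + w) (w'' + w) := by
    intro w w' w''
    rw [hS w' w'']
    apply sSup_le
    rintro _ ⟨x₁, x₂, rfl, rfl, rfl⟩
    obtain ⟨x, rfl⟩ := QuotientAddGroup.mk_surjective w
    rw [ha_shift x]
    exact hle _ _
  refine ⟨?_, ?_, ?_, hle⟩
  · intro w
    obtain ⟨x, rfl⟩ := QuotientAddGroup.mk_surjective w
    exact (ha_refl x).trans (hle x x)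
  · intro w w' w''
    rw [hS w' w'', hq]
    refine iSup₂_le ?_
    rintro _ ⟨y₂, y₃, hy₂, rfl, rfl⟩
    rw [mul_comm, hS w w', hq]
    refine iSup₂_le ?_
    rintro _ ⟨x₁, x₂, rfl, hx₂, rfl⟩
    rw [mul_comm, ha_shift (-y₂ + x₂) y₂ y₃, add_neg_cancel_left]
    refine (ha_trans _ _ _).trans ((hle _ _).trans (le_of_eq ?_))
    congr 1
    rw [QuotientAddGroup.mk_add, QuotientAddGroup.mk_add, QuotientAddGroup.mk_neg, hx₂, hy₂,
      neg_add_cancel, add_zero]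
  · intro w w' w''
    apply le_antisymm (hsh w w' w'')
    have h := hsh (-w) (w' + w) (w'' + w)
    rwa [add_neg_cancel_right, add_neg_cancel_right] at h
end

section
/- Let V be a commutative quantale and (X,a) a V-group. Let N_X = {x ∈ X | k ≤ a(0,x) and k ≤ a(x,0)} and let ā be the final structure on the quotient group X/N_X, given by ā(w₁,w₂) = ⨆{a(x₁,x₂) | [x₁] = w₁ and [x₂] = w₂}. Then (X/N_X, ā) is separated: for every w ∈ X/N_X, if k ≤ ā(w,0) and k ≤ ā(0,w) then w = 0. -/
theorem stmt_6 {V : Type*} [CompleteLattice V] [CommMonoid V]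
    (hq : ∀ (v : V) (s : Set V), v * sSup s = ⨆ u ∈ s, v * u)
    {X : Type*} [AddGroup X] (a : X → X → V)
    (ha_refl : ∀ x : X, 1 ≤ a x x)
    (ha_trans : ∀ x x' x'' : X, a x x' * a x' x'' ≤ a x x'')
    (ha_shift : ∀ x x' x'' : X, a x' x'' = a (x' + x) (x'' + x))
    (N : AddSubgroup X) [N.Normal]
    (hN : (N : Set X) = {x : X | 1 ≤ a 0 x ∧ 1 ≤ a x 0})
    (abar : X ⧸ N → X ⧸ N → V)
    (habar : ∀ w₁ w₂ : X ⧸ N, abar w₁ w₂ =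
      ⨆ x₁ : X, ⨆ x₂ : X,
        ⨆ (_ : (QuotientAddGroup.mk x₁ : X ⧸ N) = w₁ ∧ (QuotientAddGroup.mk x₂ : X ⧸ N) = w₂),
          a x₁ x₂) :
    ∀ w : X ⧸ N, 1 ≤ abar w 0 → 1 ≤ abar 0 w → w = 0 := by
  have hmono : ∀ v u u' : V, u ≤ u' → v * u ≤ v * u' := by
    intro v u u' h
    have h1 := hq v {u, u'}
    rw [sSup_pair, sup_eq_right.mpr h] at h1
    rw [h1]
    exact le_iSup₂_of_le u (by simp) le_rfl
  have hN' : ∀ x y : X, (QuotientAddGroup.mk x : X ⧸ N) = QuotientAddGroup.mk y → 1 ≤ a x y := by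
    intro x y h
    have h1 : x - y ∈ (N : Set X) := (QuotientAddGroup.eq_iff_sub_mem).mp h
    rw [hN] at h1
    have h2 := h1.2
    rw [ha_shift y] at h2
    simpa using h2
  have key : ∀ x y : X, abar (QuotientAddGroup.mk x) (QuotientAddGroup.mk y) ≤ a x y := by
    intro x y
    rw [habar]
    refine iSup_le fun x₁ => iSup_le fun x₂ => iSup_le fun h => ?_
    have e1 : a x₁ x₂ ≤ a x₁ y := by
      have := hmono (a x₁ x₂) 1 (a x₂ y) (hN' _ _ h.2)
      rw [mul_one] at this
      exact this.trans (ha_trans _ _ _)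
    have e2 : a x₁ y ≤ a x y := by
      have := hmono (a x₁ y) 1 (a x x₁) (hN' _ _ h.1.symm)
      rw [mul_one, mul_comm] at this
      exact this.trans (ha_trans _ _ _)
    exact e1.trans e2
  intro w h1 h2
  induction w using QuotientAddGroup.induction_on with
  | H x =>
    have hx : x ∈ (N : Set X) := by
      rw [hN]
      exact ⟨h2.trans (key 0 x), h1.trans (key x 0)⟩
    exact (QuotientAddGroup.eq_zero_iff x).mpr hx
end

section
/- Let V be an integral commutative quantale (k = ⊤) and (X,a) a V-group. On the product group ℤ × X define b((z,x),(z′,x′)) = a(x,x′) if z < z′, b((z,x),(z′,x′)) = ⊤ if z = z′ and x = x′, and b((z,x),(z′,x′)) = ⊥ otherwise. Then (ℤ × X, b) is a V-group: b is reflexive, transitive (b((z,x),(z′,x′)) ⊗ b((z′,x′),(z″,x″)) ≤ b((z,x),(z″,x″))) and invariant by shifting. -/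
theorem stmt_7 {V : Type*} [CompleteLattice V] [CommMonoid V]
    (hq : ∀ (v : V) (s : Set V), v * sSup s = ⨆ u ∈ s, v * u)
    (hint : (1 : V) = ⊤)
    {X : Type*} [AddGroup X] (a : X → X → V)
    (ha_refl : ∀ x : X, 1 ≤ a x x)
    (ha_trans : ∀ x x' x'' : X, a x x' * a x' x'' ≤ a x x'')
    (ha_shift : ∀ x x' x'' : X, a x' x'' = a (x' + x) (x'' + x))
    (b : ℤ × X → ℤ × X → V)
    (hb_lt : ∀ p q : ℤ × X, p.1 < q.1 → b p q = a p.2 q.2)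
    (hb_eq : ∀ p q : ℤ × X, p = q → b p q = ⊤)
    (hb_bot : ∀ p q : ℤ × X, ¬ p.1 < q.1 → p ≠ q → b p q = ⊥) :
    (∀ p : ℤ × X, 1 ≤ b p p) ∧
    (∀ p q r : ℤ × X, b p q * b q r ≤ b p r) ∧
    (∀ p q r : ℤ × X, b q r = b (q + p) (r + p)) := by
  have hbot : ∀ v : V, v * ⊥ = ⊥ := fun v => by
    have h := hq v ∅
    simpa using h
  have hbot' : ∀ v : V, ⊥ * v = ⊥ := fun v => by rw [mul_comm, hbot]
  refine ⟨fun p => ?_, fun p q r => ?_, fun p q r => ?_⟩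
  · rw [hb_eq p p rfl, hint]
  · by_cases hpq : p = q
    · subst hpq
      rw [hb_eq p p rfl, ← hint, one_mul]
    by_cases hqr : q = r
    · subst hqr
      rw [hb_eq q q rfl, ← hint, mul_one]
    by_cases h1 : p.1 < q.1
    · by_cases h2 : q.1 < r.1
      · rw [hb_lt p q h1, hb_lt q r h2, hb_lt p r (h1.trans h2)]
        exact ha_trans _ _ _
      · rw [hb_bot q r h2 hqr, hbot]
        exact bot_le
    · rw [hb_bot p q h1 hpq, hbot']
      exact bot_le
  · by_cases hqr : q = r
    · subst hqr
      rw [hb_eq q q rfl, hb_eq _ _ rfl]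
    by_cases h : q.1 < r.1
    · rw [hb_lt q r h, hb_lt (q + p) (r + p) (by simpa using h)]
      exact ha_shift _ _ _
    · rw [hb_bot q r h hqr, hb_bot (q + p) (r + p) (by simpa using h)
        (fun e => hqr (add_right_cancel e))]
end

section
/- Let V be an integral commutative quantale (k = ⊤) and (X,a) a V-group. On ℤ × X define b((z,x),(z′,x′)) = a(x,x′) if z < z′, ⊤ if z = z′ and x = x′, and ⊥ otherwise. Then the projection f(z,x) = x is final: for all x₁, x₂ ∈ X, a(x₁,x₂) = ⨆_{z₁,z₂ ∈ ℤ} b((z₁,x₁),(z₂,x₂)). -/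
theorem stmt_10 {V : Type*} [CompleteLattice V] [CommMonoid V]
    (hq : ∀ (v : V) (s : Set V), v * sSup s = ⨆ u ∈ s, v * u)
    (hint : (1 : V) = ⊤)
    {X : Type*} [AddGroup X] (a : X → X → V)
    (ha_refl : ∀ x : X, 1 ≤ a x x)
    (ha_trans : ∀ x x' x'' : X, a x x' * a x' x'' ≤ a x x'')
    (ha_shift : ∀ x x' x'' : X, a x' x'' = a (x' + x) (x'' + x))
    (b : ℤ × X → ℤ × X → V)
    (hb_lt : ∀ p q : ℤ × X, p.1 < q.1 → b p q = a p.2 q.2)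
    (hb_eq : ∀ p q : ℤ × X, p = q → b p q = ⊤)
    (hb_bot : ∀ p q : ℤ × X, ¬ p.1 < q.1 → p ≠ q → b p q = ⊥) :
    ∀ x₁ x₂ : X, a x₁ x₂ = ⨆ z₁ : ℤ, ⨆ z₂ : ℤ, b (z₁, x₁) (z₂, x₂) := by
  intro x₁ x₂
  apply le_antisymm
  · refine le_iSup_of_le 0 (le_iSup_of_le 1 ?_)
    rw [hb_lt (0, x₁) (1, x₂) (by norm_num)]
  · refine iSup_le fun z₁ => iSup_le fun z₂ => ?_
    by_cases h : z₁ < z₂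
    · rw [hb_lt (z₁, x₁) (z₂, x₂) h]
    · by_cases he : ((z₁, x₁) : ℤ × X) = (z₂, x₂)
      · have hx : x₁ = x₂ := congrArg Prod.snd he
        subst hx
        exact le_top.trans (hint ▸ ha_refl x₁)
      · rw [hb_bot _ _ h he]
        exact bot_le
end

section
/- Let V be a commutative quantale (in which arbitrary joins distribute over finite meets, i.e. V is a frame) and (X,a) a V-group. Define â : X × X → V by â(x,x′) = a(x,x′) ⊓ a(x′,x). Then (X,â) is a V-group (â is reflexive, transitive, and invariant by shifting) and it is symmetric: â(x,x′) = â(x′,x) for all x,x′ ∈ X. -/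
theorem stmt_12 {V : Type*} [CompleteLattice V] [CommMonoid V]
    (hq : ∀ (v : V) (s : Set V), v * sSup s = ⨆ u ∈ s, v * u)
    (hframe : ∀ (v : V) (s : Set V), v ⊓ sSup s = ⨆ u ∈ s, v ⊓ u)
    {X : Type*} [AddGroup X] (a : X → X → V)
    (ha_refl : ∀ x : X, 1 ≤ a x x)
    (ha_trans : ∀ x x' x'' : X, a x x' * a x' x'' ≤ a x x'')
    (ha_shift : ∀ x x' x'' : X, a x' x'' = a (x' + x) (x'' + x)) :
    (∀ x : X, 1 ≤ a x x ⊓ a x x) ∧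
    (∀ x x' x'' : X, (a x x' ⊓ a x' x) * (a x' x'' ⊓ a x'' x') ≤ a x x'' ⊓ a x'' x) ∧
    (∀ x x' x'' : X, a x' x'' ⊓ a x'' x' = a (x' + x) (x'' + x) ⊓ a (x'' + x) (x' + x)) ∧
    (∀ x x' : X, a x x' ⊓ a x' x = a x' x ⊓ a x x') := by
  have mono : ∀ v u w : V, u ≤ w → v * u ≤ v * w := by
    intro v u w h
    have h1 := hq v {u, w}
    rw [sSup_pair, sup_eq_right.mpr h] at h1
    rw [h1]
    exact le_iSup₂ (f := fun x (_ : x ∈ ({u, w} : Set V)) => v * x) u (by simp)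
  have mono2 : ∀ p q r t : V, p ≤ r → q ≤ t → p * q ≤ r * t := by
    intro p q r t h1 h2
    refine (mono p q t h2).trans ?_
    rw [mul_comm p, mul_comm r]
    exact mono t p r h1
  refine ⟨fun x => le_inf (ha_refl x) (ha_refl x), fun x x' x'' => le_inf ?_ ?_,
    fun x x' x'' => ?_, fun x x' => inf_comm _ _⟩
  · exact (mono2 _ _ _ _ inf_le_left inf_le_left).trans (ha_trans x x' x'')
  · rw [mul_comm]
    exact (mono2 _ _ _ _ inf_le_right inf_le_right).trans (ha_trans x'' x' x)
  · rw [← ha_shift x x' x'', ← ha_shift x x'' x']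
end

section
/- Let V be a commutative quantale, (X,a) a symmetric V-group, (Y,b) a separated V-group, and f : (X,a) → (Y,b) a V-homomorphism. Equip the image subgroup f(X) ≤ Y with the final structure c(y₁,y₂) = ⨆{a(x₁,x₂) | f(x₁) = y₁ and f(x₂) = y₂}. Then c is symmetric (c(y₁,y₂) = c(y₂,y₁) for all y₁,y₂ ∈ f(X)), and for all y₁,y₂ ∈ f(X), if k ≤ c(y₁,y₂) then y₁ = y₂. -/
theorem stmt_13 {V : Type*} [CompleteLattice V] [CommMonoid V]
    (hq : ∀ (v : V) (s : Set V), v * sSup s = ⨆ u ∈ s, v * u)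
    {X Y : Type*} [AddGroup X] [AddGroup Y]
    (a : X → X → V) (b : Y → Y → V)
    (ha_refl : ∀ x : X, 1 ≤ a x x)
    (ha_trans : ∀ x x' x'' : X, a x x' * a x' x'' ≤ a x x'')
    (ha_shift : ∀ x x' x'' : X, a x' x'' = a (x' + x) (x'' + x))
    (hb_refl : ∀ x : Y, 1 ≤ b x x)
    (hb_trans : ∀ x x' x'' : Y, b x x' * b x' x'' ≤ b x x'')
    (hb_shift : ∀ x x' x'' : Y, b x' x'' = b (x' + x) (x'' + x))
    (hsym : ∀ x x' : X, a x x' = a x' x)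
    (hsep : ∀ y y' : Y, 1 ≤ b y y' → 1 ≤ b y' y → y = y')
    (f : X →+ Y) (hf : ∀ x x' : X, a x x' ≤ b (f x) (f x'))
    (c : Y → Y → V)
    (hc : ∀ y₁ y₂ : Y, c y₁ y₂ =
      ⨆ x₁ : X, ⨆ x₂ : X, ⨆ (_ : f x₁ = y₁ ∧ f x₂ = y₂), a x₁ x₂) :
    (∀ y₁ y₂ : Y, y₁ ∈ Set.range f → y₂ ∈ Set.range f → c y₁ y₂ = c y₂ y₁) ∧
    (∀ y₁ y₂ : Y, y₁ ∈ Set.range f → y₂ ∈ Set.range f → 1 ≤ c y₁ y₂ → y₁ = y₂) := by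
  have hle : ∀ y₁ y₂ : Y, c y₁ y₂ ≤ b y₁ y₂ := by
    intro y₁ y₂
    rw [hc]
    refine iSup_le fun x₁ => iSup_le fun x₂ => iSup_le fun h => ?_
    rw [← h.1, ← h.2]
    exact hf x₁ x₂
  have hs : ∀ y₁ y₂ : Y, c y₁ y₂ ≤ c y₂ y₁ := by
    intro y₁ y₂
    rw [hc y₁ y₂, hc y₂ y₁]
    refine iSup_le fun x₁ => iSup_le fun x₂ => iSup_le fun h => ?_
    rw [hsym x₁ x₂]
    exact le_iSup_of_le x₂ (le_iSup_of_le x₁ (le_iSup_of_le ⟨h.2, h.1⟩ le_rfl))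
  refine ⟨fun y₁ y₂ _ _ => le_antisymm (hs _ _) (hs _ _), fun y₁ y₂ _ _ h => ?_⟩
  exact hsep _ _ (h.trans (hle _ _)) ((h.trans (hs _ _)).trans (hle _ _))
end

section
/- Let V be a commutative quantale and let (Y,b), (X,a), (Z,c) be V-groups with (Z,c) symmetric. Let N_X = {x ∈ X | k ≤ a(0,x) and k ≤ a(x,0)}, let η_X : X → X/N_X be the quotient map and ā the final structure on X/N_X (ā(w₁,w₂) = ⨆{a(x₁,x₂) | [x₁] = w₁, [x₂] = w₂}). Suppose f : (Y,b) → (X,a) is a V-homomorphism, β : (Y,b) → (Z,c) is a V-homomorphism, and α : Z → X/N_X is a group homomorphism with c(z,z′) ≤ ā(α(z),α(z′)) for all z,z′ ∈ Z, such that α ∘ β = η_X ∘ f. Then b(y,y′) ≤ a(f(y′),f(y)) for all y,y′ ∈ Y; consequently f is a V-homomorphism from (Y,b) to (X,â), where â(x,x′) = a(x,x′) ⊓ a(x′,x). -/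
theorem stmt_15 {V : Type*} [CompleteLattice V] [CommMonoid V]
    (hq : ∀ (v : V) (s : Set V), v * sSup s = ⨆ u ∈ s, v * u)
    {Y X Z : Type*} [AddGroup Y] [AddGroup X] [AddGroup Z]
    (b : Y → Y → V) (a : X → X → V) (c : Z → Z → V)
    (hb_refl : ∀ x : Y, 1 ≤ b x x)
    (hb_trans : ∀ x x' x'' : Y, b x x' * b x' x'' ≤ b x x'')
    (hb_shift : ∀ x x' x'' : Y, b x' x'' = b (x' + x) (x'' + x))
    (ha_refl : ∀ x : X, 1 ≤ a x x)
    (ha_trans : ∀ x x' x'' : X, a x x' * a x' x'' ≤ a x x'')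
    (ha_shift : ∀ x x' x'' : X, a x' x'' = a (x' + x) (x'' + x))
    (hc_refl : ∀ x : Z, 1 ≤ c x x)
    (hc_trans : ∀ x x' x'' : Z, c x x' * c x' x'' ≤ c x x'')
    (hc_shift : ∀ x x' x'' : Z, c x' x'' = c (x' + x) (x'' + x))
    (hcsym : ∀ z z' : Z, c z z' = c z' z)
    (N : AddSubgroup X) [N.Normal]
    (hN : (N : Set X) = {x : X | 1 ≤ a 0 x ∧ 1 ≤ a x 0})
    (abar : X ⧸ N → X ⧸ N → V)
    (habar : ∀ w₁ w₂ : X ⧸ N, abar w₁ w₂ =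
      ⨆ x₁ : X, ⨆ x₂ : X,
        ⨆ (_ : (QuotientAddGroup.mk x₁ : X ⧸ N) = w₁ ∧ (QuotientAddGroup.mk x₂ : X ⧸ N) = w₂),
          a x₁ x₂)
    (f : Y →+ X) (hf : ∀ y y' : Y, b y y' ≤ a (f y) (f y'))
    (β : Y →+ Z) (hβ : ∀ y y' : Y, b y y' ≤ c (β y) (β y'))
    (α : Z →+ X ⧸ N) (hα : ∀ z z' : Z, c z z' ≤ abar (α z) (α z'))
    (hcomm : ∀ y : Y, α (β y) = QuotientAddGroup.mk (f y)) :
    (∀ y y' : Y, b y y' ≤ a (f y') (f y)) ∧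
    (∀ y y' : Y, b y y' ≤ a (f y) (f y') ⊓ a (f y') (f y)) := by
  have mono : ∀ v u w : V, u ≤ w → v * u ≤ v * w := by
    intro v u w h
    have h1 : sSup ({u, w} : Set V) = w := by rw [sSup_pair]; exact sup_eq_right.mpr h
    have h2 := hq v {u, w}
    rw [h1] at h2
    rw [h2]
    exact le_iSup₂_of_le u (by simp) le_rfl
  have key : ∀ x x' : X, (QuotientAddGroup.mk x : X ⧸ N) = QuotientAddGroup.mk x' →
      1 ≤ a x' x := by
    intro x x' h
    have h1 : x - x' ∈ (N : Set X) := (QuotientAddGroup.eq_iff_sub_mem).1 h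
    rw [hN] at h1
    have h2 := h1.1
    rw [ha_shift x'] at h2
    simpa using h2
  have main : ∀ y y' : Y, b y y' ≤ a (f y') (f y) := by
    intro y y'
    refine (hβ y y').trans ?_
    rw [hcsym]
    refine (hα _ _).trans ?_
    rw [habar, hcomm, hcomm]
    refine iSup_le fun x₁ => iSup_le fun x₂ => iSup_le fun h => ?_
    have e1 := key _ _ h.1
    have e2 := key _ _ h.2.symm
    have s1 : a x₁ x₂ ≤ a x₁ (f y) := by
      have := mono (a x₁ x₂) _ _ e2
      rw [mul_one] at this
      exact this.trans (ha_trans _ _ _)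
    have s2 : a x₁ (f y) ≤ a (f y') (f y) := by
      have := mono (a x₁ (f y)) _ _ e1
      rw [mul_one, mul_comm] at this
      exact this.trans (ha_trans _ _ _)
    exact s1.trans s2
  exact ⟨main, fun y y' => le_inf (hf y y') (main y y')⟩
end

section
/- Let 𝒞 be a normal category: a finitely complete category with a zero object in which every morphism factors as a normal epimorphism (a cokernel of some morphism) followed by a monomorphism, and in which the pullback of a normal epimorphism along any morphism is a normal epimorphism. Given a commutative diagram of two short exact sequences, with rows (κ : A → B, f : B → C) and (κ′ : A′ → B′, f′ : B′ → C′) and vertical morphisms a : A → A′, b : B → B′, c : C → C′ satisfying κ′ ∘ a = b ∘ κ and f′ ∘ b = c ∘ f, the left-hand square (κ, a, b, κ′) is a pullback if and only if c is a monomorphism. -/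
open CategoryTheory CategoryTheory.Limits in
theorem stmt_18 {𝒞 : Type*} [Category 𝒞] [HasFiniteLimits 𝒞]
    [HasZeroObject 𝒞] [HasZeroMorphisms 𝒞]
    (hfact : ∀ {A B : 𝒞} (f : A ⟶ B), ∃ (I : 𝒞) (e : A ⟶ I) (m : I ⟶ B),
      Nonempty (NormalEpi e) ∧ Mono m ∧ e ≫ m = f)
    (hstab : ∀ {A B E : 𝒞} (f : A ⟶ B) (p : E ⟶ B),
      Nonempty (NormalEpi p) → Nonempty (NormalEpi (pullback.snd p f)))
    {A B Z A' B' Z' : 𝒞}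
    (κ : A ⟶ B) (f : B ⟶ Z) (κ' : A' ⟶ B') (f' : B' ⟶ Z')
    (a : A ⟶ A') (b : B ⟶ B') (c : Z ⟶ Z')
    (w : κ ≫ f = 0) (w' : κ' ≫ f' = 0)
    (hker : Nonempty (IsLimit (KernelFork.ofι κ w)))
    (hcoker : Nonempty (IsColimit (CokernelCofork.ofπ f w)))
    (hker' : Nonempty (IsLimit (KernelFork.ofι κ' w')))
    (hcoker' : Nonempty (IsColimit (CokernelCofork.ofπ f' w')))
    (sq1 : κ ≫ b = a ≫ κ') (sq2 : f ≫ c = b ≫ f') :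
    IsPullback κ a b κ' ↔ Mono c := by
  obtain ⟨hk⟩ := hker
  obtain ⟨hc⟩ := hcoker
  obtain ⟨hk'⟩ := hker'
  have fepi : ∀ {X : 𝒞} (x y : Z ⟶ X), f ≫ x = f ≫ y → x = y := fun x y h =>
    Cofork.IsColimit.hom_ext hc h
  have κmono : ∀ {X : 𝒞} (x y : X ⟶ A), x ≫ κ = y ≫ κ → x = y := fun x y h =>
    Fork.IsLimit.hom_ext hk h
  have κmono' : ∀ {X : 𝒞} (x y : X ⟶ A'), x ≫ κ' = y ≫ κ' → x = y := fun x y h =>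
    Fork.IsLimit.hom_ext hk' h
  have lk : ∀ {X : 𝒞} (x : X ⟶ B), x ≫ f = 0 → ∃ u : X ⟶ A, u ≫ κ = x := fun x h =>
    ⟨_, (KernelFork.IsLimit.lift' hk x h).2⟩
  have lk' : ∀ {X : 𝒞} (x : X ⟶ B'), x ≫ f' = 0 → ∃ u : X ⟶ A', u ≫ κ' = x := fun x h =>
    ⟨_, (KernelFork.IsLimit.lift' hk' x h).2⟩
  have dc : ∀ {X : 𝒞} (x : B ⟶ X), κ ≫ x = 0 → ∃ u : Z ⟶ X, f ≫ u = x := fun x h =>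
    ⟨_, (CokernelCofork.IsColimit.desc' hc x h).2⟩
  constructor
  · intro hp
    obtain ⟨I, e, m, ⟨he⟩, hm, hem⟩ := hfact (f ≫ c)
    have h1 : he.g ≫ f = 0 := by
      obtain ⟨t, ht⟩ := lk' (he.g ≫ b) (by
        rw [Category.assoc, ← sq2, ← hem, reassoc_of% he.w, zero_comp])
      rw [← hp.lift_fst he.g t ht.symm, Category.assoc, w, comp_zero]
    obtain ⟨j, hj⟩ : ∃ j : I ⟶ Z, e ≫ j = f :=
      ⟨_, (CokernelCofork.IsColimit.desc' he.isColimit f h1).2⟩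
    have h2 : κ ≫ e = 0 := by
      rw [← cancel_mono m, Category.assoc, hem, reassoc_of% w, zero_comp, zero_comp]
    obtain ⟨i, hi⟩ := dc e h2
    have hij : i ≫ j = 𝟙 Z := fepi _ _ (by rw [reassoc_of% hi, hj, Category.comp_id])
    have hc' : i ≫ m = c := fepi _ _ (by rw [reassoc_of% hi, hem])
    have : Mono i := by
      have : Mono (i ≫ j) := by rw [hij]; infer_instance
      exact mono_of_mono i j
    rw [← hc']
    exact mono_comp i m
  · intro hmono
    have hz : ∀ s : PullbackCone b κ', s.fst ≫ f = 0 := fun s => by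
      rw [← cancel_mono c, Category.assoc, sq2, reassoc_of% s.condition, w', comp_zero, zero_comp]
    refine ⟨⟨sq1⟩, ⟨PullbackCone.IsLimit.mk _ (fun s => (lk s.fst (hz s)).choose) ?_ ?_ ?_⟩⟩
    · intro s
      exact (lk s.fst (hz s)).choose_spec
    · intro s
      apply κmono'
      rw [Category.assoc, ← sq1, ← Category.assoc, (lk s.fst (hz s)).choose_spec, s.condition]
    · intro s q h1 h2
      apply κmono
      rw [h1, (lk s.fst (hz s)).choose_spec]
end
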